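/- Let g = (g₀, g₋₁, d, [·,·], l₃) be a Lie 2-algebra over ℝ with g₀, g₋₁ finite-dimensional. For Θ ∈ Hom(g₀,g₋₁) set e^Θ := ∑_{n=1}^∞ (1/n!) Θ∘(d∘Θ)^{n−1}, and let l_{δ(Θ)}(x,y) := Θ[x,y] − [x,Θy] − [Θx,y]. Then ∂(e^Θ) = e^{d̄(Θ)}; explicitly: (1) id_{g₀} + d∘e^Θ = exp(d∘Θ); (2) id_{g₋₁} + e^Θ∘d = exp(Θ∘d); (3) for all x,y ∈ g₀: ∑_{n=1}^∞ (1/n!) ∑_{i+j+k=n−1, i,j,k≥0} C(i+j,i) · (Θ∘d)ᵏ( l_{δ(Θ)}((d∘Θ)ⁱ x, (d∘Θ)ʲ y) ) = e^Θ[x,y] − [e^Θ x, y] − [x, e^Θ y] − [e^Θ x, d e^Θ y], i.e. the expression on the left equals l^{id}_{e^Θ}(x,y). -/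

import Mathlib

open LinearMap

/-- A (semistrict) Lie 2-algebra `g = (g₀ ⊕ g₋₁, d, [·,·], l₃)` over a field `F`:
a linear map `d : g₋₁ → g₀`, a skew-symmetric bracket `b0` on `g₀`, a mixed
bracket `b1 : g₀ × g₋₁ → g₋₁` (with `[a,x] := -[x,a]`), and an alternating
trilinear `l3 : g₀³ → g₋₁` satisfying axioms (a), (b), (c). -/
structure LieTwoAlg (F : Type*) [Field F] (g0 gm : Type*)
    [AddCommGroup g0] [Module F g0] [AddCommGroup gm] [Module F gm] where
  d : gm →ₗ[F] g0
  b0 : g0 →ₗ[F] g0 →ₗ[F] g0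
  b1 : g0 →ₗ[F] gm →ₗ[F] gm
  l3 : g0 →ₗ[F] g0 →ₗ[F] g0 →ₗ[F] gm
  b0_skew : ∀ x y, b0 x y = - b0 y x
  l3_alt₁ : ∀ x y, l3 x x y = 0
  l3_alt₂ : ∀ x y, l3 x y y = 0
  ax_a1 : ∀ x a, d (b1 x a) = b0 x (d a)
  ax_a2 : ∀ a b, b1 (d a) b = - b1 (d b) a
  ax_b1 : ∀ x y z, b0 (b0 x y) z + b0 (b0 y z) x + b0 (b0 z x) y = - d (l3 x y z)
  ax_b2 : ∀ x y a, b1 (b0 x y) a - b1 x (b1 y a) + b1 y (b1 x a) = - l3 x y (d a)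
  ax_c : ∀ x y z w,
    l3 (b0 x y) z w + l3 (b0 y z) w x + l3 (b0 z w) x y + l3 (b0 w x) y z
      = -(b1 w (l3 x y z) + b1 x (l3 y z w) + b1 y (l3 z w x) + b1 z (l3 w x y))

/-- A derivation of degree 0 of the (raw) Lie 2-algebra data `(d, b0, b1, l3)`:
a triple `(X0, X1, lX)` with `X0 ∘ d = d ∘ X1` and `lX` alternating bilinear,
satisfying conditions (a), (b), (c) of Definition 3.2. -/
structure IsDer0 {F : Type*} [Field F] {g0 gm : Type*}
    [AddCommGroup g0] [Module F g0] [AddCommGroup gm] [Module F gm]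
    (d : gm →ₗ[F] g0) (b0 : g0 →ₗ[F] g0 →ₗ[F] g0) (b1 : g0 →ₗ[F] gm →ₗ[F] gm)
    (l3 : g0 →ₗ[F] g0 →ₗ[F] g0 →ₗ[F] gm)
    (X0 : g0 →ₗ[F] g0) (X1 : gm →ₗ[F] gm) (lX : g0 →ₗ[F] g0 →ₗ[F] gm) : Prop where
  comm : X0 ∘ₗ d = d ∘ₗ X1
  alt : ∀ x, lX x x = 0
  der_a : ∀ x y, d (lX x y) = X0 (b0 x y) - b0 (X0 x) y - b0 x (X0 y)
  der_b : ∀ x a, lX x (d a) = X1 (b1 x a) - b1 (X0 x) a - b1 x (X1 a)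
  der_c : ∀ x y z, X1 (l3 x y z) =
      lX x (b0 y z) + lX y (b0 z x) + lX z (b0 x y)
      + b1 x (lX y z) + b1 y (lX z x) + b1 z (lX x y)
      + l3 (X0 x) y z + l3 (X0 y) z x + l3 (X0 z) x y

/-- `(L_X ω)(x,y) = X₁(ω(x,y)) − ω(X₀x,y) − ω(x,X₀y)`. -/
def Lop {F : Type*} [Field F] {g0 gm : Type*}
    [AddCommGroup g0] [Module F g0] [AddCommGroup gm] [Module F gm]
    (X0 : g0 →ₗ[F] g0) (X1 : gm →ₗ[F] gm) (ω : g0 →ₗ[F] g0 →ₗ[F] gm) :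
    g0 →ₗ[F] g0 →ₗ[F] gm :=
  ω.compr₂ X1 - ω ∘ₗ X0 - ω.compl₂ X0

/-- `l_{δ(Θ)}(x,y) = Θ[x,y] − [x,Θy] − [Θx,y]`. -/
def ldelta {F : Type*} [Field F] {g0 gm : Type*}
    [AddCommGroup g0] [Module F g0] [AddCommGroup gm] [Module F gm]
    (G : LieTwoAlg F g0 gm) (Θ : g0 →ₗ[F] gm) : g0 →ₗ[F] g0 →ₗ[F] gm :=
  G.b0.compr₂ Θ - G.b1.compl₂ Θ + (G.b1.compl₂ Θ).flip

/-- The exponential `exp(X) m = ∑ Xⁿm/n!` of a linear endomorphism. -/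
noncomputable def expv {M : Type*} [NormedAddCommGroup M] [NormedSpace ℝ M]
    (X : M →ₗ[ℝ] M) (m : M) : M :=
  ∑' n : ℕ, ((n.factorial : ℝ))⁻¹ • (X ^ n) m

/-- The series
`E(t)(x,y) = ∑_{n≥1} (tⁿ/n!) ∑_{i+j+k=n−1} C(i+j,i) X₁ᵏ l_X(X₀ⁱx, X₀ʲy)`. -/
noncomputable def Eser {g0 gm : Type*}
    [NormedAddCommGroup g0] [NormedSpace ℝ g0]
    [NormedAddCommGroup gm] [NormedSpace ℝ gm]
    (X0 : g0 →ₗ[ℝ] g0) (X1 : gm →ₗ[ℝ] gm) (lX : g0 →ₗ[ℝ] g0 →ₗ[ℝ] gm)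
    (t : ℝ) (x y : g0) : gm :=
  ∑' n : ℕ, (t ^ (n + 1) / ((n + 1).factorial : ℝ)) •
    ∑ c ∈ Finset.Nat.antidiagonalTuple 3 n,
      (((c 0 + c 1).choose (c 0) : ℝ)) •
        (X1 ^ (c 2)) (lX ((X0 ^ (c 0)) x) ((X0 ^ (c 1)) y))

/-- The series `e^{tΘ} = ∑_{n≥1} (tⁿ/n!) Θ∘(d∘Θ)^{n−1}`, applied to `x`. -/
noncomputable def eTh {g0 gm : Type*}
    [NormedAddCommGroup g0] [NormedSpace ℝ g0]
    [NormedAddCommGroup gm] [NormedSpace ℝ gm]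
    (d : gm →ₗ[ℝ] g0) (Θ : g0 →ₗ[ℝ] gm) (t : ℝ) (x : g0) : gm :=
  ∑' n : ℕ, (t ^ (n + 1) / ((n + 1).factorial : ℝ)) • Θ (((d ∘ₗ Θ) ^ n) x)

/-!
Write `X = d ∘ Θ`, `Y = Θ ∘ d` and `Tₙ = Θ ∘ Xⁿ⁻¹` with `T₀ = 0`, so that `e^Θ = ∑ Tₙ / n!`.
Comparing coefficients, (1) and (2) say that `d ∘ Tₙ = Xⁿ` and `Tₙ ∘ d = Yⁿ` for `n ≥ 1`.

For (3), axiom (a) makes `[Xⁱ x, Tⱼ y]` and `-[Xʲ y, Tᵢ x]` a single lift `h(i, j)` of the bracket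
`[Xⁱ x, Xʲ y]` along `d`, and
`l_{δ(Θ)}(Xⁱ x, Xʲ y) = Θ [Xⁱ x, Xʲ y] - h(i, j + 1) - h(i + 1, j)`.
Weighted by binomial coefficients, the last two terms add up by Pascal's rule, and applying `Y`
makes the sum telescope: the coefficient of `1 / n!` on the left of (3) is
`Tₙ [x, y] - ∑_{i + j = n} C(n, i) h(i, j)`. The sum over `i + j = n` is the coefficient of a Cauchy
product of exponential series.

All the `Tₙ x` lie in the range of `Θ`; on a finite-dimensional range every linear or bilinear map
is continuous and may be applied to the series term by term.
-/

section CauchyProduct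

open Filter Finset Topology

variable {𝕜 E F G : Type*} [NontriviallyNormedField 𝕜]
  [NormedAddCommGroup E] [NormedSpace 𝕜 E] [NormedAddCommGroup F] [NormedSpace 𝕜 F]
  [NormedAddCommGroup G] [NormedSpace 𝕜 G]

lemma hasSum_bilinear_of_summable_norm {ι κ : Type*} (B : E →L[𝕜] F →L[𝕜] G)
    {f : ι → E} {g : κ → F} {s : E} {t : F} (hf : HasSum f s) (hg : HasSum g t)
    (hf_norm : Summable fun i ↦ ‖f i‖) (hg_norm : Summable fun j ↦ ‖g j‖) :
    HasSum (fun p : ι × κ ↦ B (f p.1) (g p.2)) (B s t) := by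
  have summable_norm : Summable fun p : ι × κ ↦ ‖B (f p.1) (g p.2)‖ := by
    refine .of_nonneg_of_le (fun _ ↦ norm_nonneg _) (fun p ↦ B.le_opNorm₂ (f p.1) (g p.2)) ?_
    simpa only [mul_assoc] using
      (hf_norm.mul_of_nonneg hg_norm (fun _ ↦ norm_nonneg _) fun _ ↦ norm_nonneg _).mul_left ‖B‖
  classical
  apply hasSum_of_subseq_of_summable summable_norm tendsto_finsetProd_atTop
  rw [← prod_atTop_atTop_eq]
  have tendsto_partialSums :
      Tendsto (fun p : Finset ι × Finset κ ↦ B (∑ i ∈ p.1, f i) (∑ j ∈ p.2, g j))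
        (atTop ×ˢ atTop) (𝓝 (B s t)) :=
    (B.continuous₂.tendsto (s, t)).comp (Tendsto.prodMk_nhds
      (Tendsto.comp hf tendsto_fst) (Tendsto.comp hg tendsto_snd))
  simpa [sum_product_right] using tendsto_partialSums

lemma hasSum_sum_antidiagonal_bilinear_of_summable_norm (B : E →L[𝕜] F →L[𝕜] G)
    {f : ℕ → E} {g : ℕ → F} {s : E} {t : F} (hf : HasSum f s) (hg : HasSum g t)
    (hf_norm : Summable fun n ↦ ‖f n‖) (hg_norm : Summable fun n ↦ ‖g n‖) :
    HasSum (fun n ↦ ∑ p ∈ antidiagonal n, B (f p.1) (g p.2)) (B s t) := by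
  have hasSum_sigma := HasAntidiagonal.sigmaAntidiagonalEquivProd.hasSum_iff.2
    (hasSum_bilinear_of_summable_norm B hf hg hf_norm hg_norm)
  refine hasSum_sigma.sigma fun n ↦ ?_
  rw [← Finset.sum_coe_sort]
  exact hasSum_fintype _

end CauchyProduct

section Antidiagonal

open Finset

variable {M : Type*} [AddCommMonoid M]

lemma sum_antidiagonalTuple_three (f : ℕ → ℕ → ℕ → M) (n : ℕ) :
    ∑ c ∈ Nat.antidiagonalTuple 3 n, f (c 0) (c 1) (c 2)
      = ∑ p ∈ antidiagonal n, ∑ q ∈ antidiagonal p.1, f q.1 q.2 p.2 := by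
  rw [sum_sigma']
  refine sum_nbij' (fun c ↦ ⟨(c 0 + c 1, c 2), (c 0, c 1)⟩) (fun s ↦ ![s.2.1, s.2.2, s.1.2])
    ?_ ?_ ?_ ?_ ?_
  · simp [Nat.mem_antidiagonalTuple, Fin.sum_univ_three]
  · simp +contextual [Nat.mem_antidiagonalTuple, Fin.sum_univ_three]
  · intro c _
    ext i
    fin_cases i <;> rfl
  · rintro ⟨⟨_, _⟩, ⟨_, _⟩⟩ hs
    obtain ⟨-, rfl⟩ := by simpa using hs
    rfl
  · simp

lemma sum_antidiagonal_choose_nsmul_succ_add (f : ℕ → ℕ → M) (n : ℕ) :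
    ∑ p ∈ antidiagonal n, n.choose p.1 • (f p.1 (p.2 + 1) + f (p.1 + 1) p.2)
      = ∑ p ∈ antidiagonal (n + 1), (n + 1).choose p.1 • f p.1 p.2 := by
  simp only [sum_antidiagonal_choose_succ_nsmul, smul_add, sum_add_distrib]
  congr 1
  refine sum_congr rfl fun p hp ↦ ?_
  rw [n.choose_symm_of_eq_add (mem_antidiagonal.1 hp).symm]

lemma sum_antidiagonal_choose_nsmul_ite_fst (f : ℕ → M) (n : ℕ) :
    ∑ p ∈ antidiagonal n, n.choose p.1 • (if p.1 = 0 then f p.2 else 0) = f n := by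
  rw [sum_eq_single_of_mem (0, n) (by simp)]
  · simp
  · rintro ⟨i, j⟩ hij hne
    have : i ≠ 0 := by rintro rfl; simp_all
    simp [this]

lemma sum_antidiagonal_choose_nsmul_ite_snd (f : ℕ → M) (n : ℕ) :
    ∑ p ∈ antidiagonal n, n.choose p.1 • (if p.2 = 0 then f p.1 else 0) = f n := by
  rw [sum_eq_single_of_mem (n, 0) (by simp)]
  · simp
  · rintro ⟨i, j⟩ hij hne
    have : j ≠ 0 := by rintro rfl; simp_all
    simp [this]

end Antidiagonal

section TwistedPow

variable {R M N P : Type*} [CommSemiring R] [AddCommMonoid M] [Module R M]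
  [AddCommMonoid N] [Module R N] [AddCommMonoid P] [Module R P]

/-- The `n`-th power `Θ ∘ (d ∘ Θ)ⁿ⁻¹` of `Θ` for the associative product `σ ⋆ τ = σ ∘ d ∘ τ` on
`Hom(M, N)`, so that `e^Θ = ∑ Θ^{⋆n} / n!`. The product has no unit; the zeroth power is `0`. -/
def twistedPow (d : N →ₗ[R] M) (Θ : M →ₗ[R] N) : ℕ → M →ₗ[R] N
  | 0 => 0
  | n + 1 => Θ ∘ₗ (d ∘ₗ Θ) ^ n

variable (d : N →ₗ[R] M) (Θ : M →ₗ[R] N)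

@[simp]
lemma twistedPow_zero : twistedPow d Θ 0 = 0 := rfl

lemma twistedPow_succ_apply (n : ℕ) (x : M) :
    twistedPow d Θ (n + 1) x = Θ (((d ∘ₗ Θ) ^ n) x) := rfl

lemma twistedPow_succ_apply' (n : ℕ) (x : M) :
    twistedPow d Θ (n + 1) x = ((Θ ∘ₗ d) ^ n) (Θ x) := by
  induction n generalizing x with
  | zero => rfl
  | succ _ ih => exact ih (d (Θ x))

lemma pow_comp_apply_eq_ite_add (n : ℕ) (x : M) :
    ((d ∘ₗ Θ) ^ n) x = (if n = 0 then x else 0) + d (twistedPow d Θ n x) := by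
  cases n with
  | zero => simp
  | succ n => simp [twistedPow_succ_apply, pow_succ']

lemma pow_comp_apply_eq_ite_add' (n : ℕ) (a : N) :
    ((Θ ∘ₗ d) ^ n) a = (if n = 0 then a else 0) + twistedPow d Θ n (d a) := by
  cases n with
  | zero => simp
  | succ n => simp [twistedPow_succ_apply', pow_succ]

lemma twistedPow_comp (ι : P →ₗ[R] N) (θ : M →ₗ[R] P) (d : N →ₗ[R] M) (n : ℕ) :
    twistedPow d (ι ∘ₗ θ) n = ι ∘ₗ twistedPow (d ∘ₗ ι) θ n := by
  cases n with
  | zero => simp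
  | succ => rfl

end TwistedPow

namespace LieTwoAlg

open Finset

variable {F g0 gm : Type*} [Field F] [AddCommGroup g0] [Module F g0] [AddCommGroup gm] [Module F gm]
  (G : LieTwoAlg F g0 gm) (Θ : g0 →ₗ[F] gm) (x y : g0)

/-- The lift of the bracket `[Xⁱ x, Xʲ y]`, `X = d ∘ Θ`, along `d : g₋₁ → g₀`, obtained by dropping
the last `d` of `Xʲ = d ∘ Θ^{⋆j}` or, if `j = 0`, of `Xⁱ`. There is no lift for `i = j = 0`, where
the value is `0`. -/
def bracketLift : ℕ → ℕ → gm
  | i, 0 => -G.b1 y (twistedPow G.d Θ i x)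
  | i, j + 1 => G.b1 (((G.d ∘ₗ Θ) ^ i) x) (twistedPow G.d Θ (j + 1) y)

lemma bracketLift_eq (i j : ℕ) :
    G.bracketLift Θ x y i j = (if i = 0 then G.b1 x (twistedPow G.d Θ j y) else 0)
      - (if j = 0 then G.b1 y (twistedPow G.d Θ i x) else 0)
      - G.b1 (G.d (twistedPow G.d Θ j y)) (twistedPow G.d Θ i x) := by
  cases j with
  | zero => simp [bracketLift]
  | succ j =>
    rw [bracketLift, pow_comp_apply_eq_ite_add, map_add, LinearMap.add_apply,
      G.ax_a2 (twistedPow G.d Θ i x)]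
    split_ifs <;> simp_all [sub_eq_add_neg]

lemma bracketLift_succ_left (i j : ℕ) :
    G.bracketLift Θ x y (i + 1) j
      = -G.b1 (((G.d ∘ₗ Θ) ^ j) y) (twistedPow G.d Θ (i + 1) x) := by
  rw [bracketLift_eq, pow_comp_apply_eq_ite_add G.d Θ j y, map_add, LinearMap.add_apply]
  split_ifs <;> simp_all [sub_eq_add_neg, add_comm]

lemma d_bracketLift {i j : ℕ} (h : i + j ≠ 0) :
    G.d (G.bracketLift Θ x y i j) = G.b0 (((G.d ∘ₗ Θ) ^ i) x) (((G.d ∘ₗ Θ) ^ j) y) := by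
  match i, j with
  | i, j + 1 => simp [bracketLift, G.ax_a1, pow_comp_apply_eq_ite_add G.d Θ (j + 1)]
  | i + 1, 0 =>
    simp [bracketLift, G.ax_a1, pow_comp_apply_eq_ite_add G.d Θ (i + 1), ← G.b0_skew]

lemma ldelta_pow_apply (i j : ℕ) :
    ldelta G Θ (((G.d ∘ₗ Θ) ^ i) x) (((G.d ∘ₗ Θ) ^ j) y)
      = Θ (G.b0 (((G.d ∘ₗ Θ) ^ i) x) (((G.d ∘ₗ Θ) ^ j) y))
        - (G.bracketLift Θ x y i (j + 1) + G.bracketLift Θ x y (i + 1) j) := by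
  rw [bracketLift_succ_left]
  simp only [ldelta, bracketLift, twistedPow_succ_apply, LinearMap.add_apply, LinearMap.sub_apply,
    compr₂_apply, compl₂_apply, flip_apply]
  abel

lemma sum_choose_nsmul_bracketLift (n : ℕ) :
    ∑ p ∈ antidiagonal n, n.choose p.1 • G.bracketLift Θ x y p.1 p.2
      = G.b1 x (twistedPow G.d Θ n y) - G.b1 y (twistedPow G.d Θ n x)
        - ∑ p ∈ antidiagonal n, n.choose p.1 •
            G.b1 (G.d (twistedPow G.d Θ p.2 y)) (twistedPow G.d Θ p.1 x) := by
  simp only [bracketLift_eq, smul_sub, sum_sub_distrib]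
  rw [sum_antidiagonal_choose_nsmul_ite_fst fun j ↦ G.b1 x (twistedPow G.d Θ j y),
    sum_antidiagonal_choose_nsmul_ite_snd fun i ↦ G.b1 y (twistedPow G.d Θ i x)]

lemma d_sum_choose_nsmul_bracketLift (n : ℕ) :
    G.d (∑ p ∈ antidiagonal (n + 1), (n + 1).choose p.1 • G.bracketLift Θ x y p.1 p.2)
      = ∑ p ∈ antidiagonal (n + 1), (n + 1).choose p.1 •
          G.b0 (((G.d ∘ₗ Θ) ^ p.1) x) (((G.d ∘ₗ Θ) ^ p.2) y) := by
  simp only [map_sum, map_nsmul]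
  refine sum_congr rfl fun p hp ↦ ?_
  rw [d_bracketLift _ _ _ _ (mem_antidiagonal.1 hp ▸ n.succ_ne_zero)]

lemma sum_choose_nsmul_ldelta (n : ℕ) :
    ∑ p ∈ antidiagonal n, n.choose p.1 •
        ldelta G Θ (((G.d ∘ₗ Θ) ^ p.1) x) (((G.d ∘ₗ Θ) ^ p.2) y)
      = Θ (∑ p ∈ antidiagonal n, n.choose p.1 •
            G.b0 (((G.d ∘ₗ Θ) ^ p.1) x) (((G.d ∘ₗ Θ) ^ p.2) y))
        - ∑ p ∈ antidiagonal (n + 1), (n + 1).choose p.1 • G.bracketLift Θ x y p.1 p.2 := by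
  simp only [ldelta_pow_apply, smul_sub, sum_sub_distrib, map_sum, map_nsmul,
    sum_antidiagonal_choose_nsmul_succ_add]

lemma sum_pow_sum_choose_nsmul_ldelta (n : ℕ) :
    ∑ p ∈ antidiagonal n, ((Θ ∘ₗ G.d) ^ p.2) (∑ q ∈ antidiagonal p.1, p.1.choose q.1 •
        ldelta G Θ (((G.d ∘ₗ Θ) ^ q.1) x) (((G.d ∘ₗ Θ) ^ q.2) y))
      = twistedPow G.d Θ (n + 1) (G.b0 x y)
        - ∑ p ∈ antidiagonal (n + 1), (n + 1).choose p.1 • G.bracketLift Θ x y p.1 p.2 := by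
  induction n with
  | zero =>
    rw [Nat.antidiagonal_zero, sum_singleton, sum_choose_nsmul_ldelta]
    simp [twistedPow_succ_apply]
  | succ n ih =>
    rw [Nat.sum_antidiagonal_succ']
    simp only [pow_succ', Module.End.mul_apply, pow_zero, Module.End.one_apply, ← map_sum]
    rw [ih, sum_choose_nsmul_ldelta, comp_apply, map_sub, map_sub, d_sum_choose_nsmul_bracketLift,
      twistedPow_succ_apply' _ _ (n + 1), pow_succ', Module.End.mul_apply, comp_apply,
      ← twistedPow_succ_apply']
    abel

lemma sum_antidiagonalTuple_choose_smul_pow_ldelta (n : ℕ) :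
    ∑ c ∈ Nat.antidiagonalTuple 3 n, ((c 0 + c 1).choose (c 0) : F) •
        ((Θ ∘ₗ G.d) ^ c 2) (ldelta G Θ (((G.d ∘ₗ Θ) ^ c 0) x) (((G.d ∘ₗ Θ) ^ c 1) y))
      = twistedPow G.d Θ (n + 1) (G.b0 x y) - G.b1 x (twistedPow G.d Θ (n + 1) y)
        + G.b1 y (twistedPow G.d Θ (n + 1) x)
        + ∑ p ∈ antidiagonal (n + 1), (n + 1).choose p.1 •
            G.b1 (G.d (twistedPow G.d Θ p.2 y)) (twistedPow G.d Θ p.1 x) := by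
  rw [sum_antidiagonalTuple_three fun i j k ↦ ((i + j).choose i : F) •
    ((Θ ∘ₗ G.d) ^ k) (ldelta G Θ (((G.d ∘ₗ Θ) ^ i) x) (((G.d ∘ₗ Θ) ^ j) y))]
  calc
    _ = ∑ p ∈ antidiagonal n, ((Θ ∘ₗ G.d) ^ p.2) (∑ q ∈ antidiagonal p.1, p.1.choose q.1 •
          ldelta G Θ (((G.d ∘ₗ Θ) ^ q.1) x) (((G.d ∘ₗ Θ) ^ q.2) y)) := by
      refine sum_congr rfl fun p _ ↦ ?_
      rw [map_sum]
      refine sum_congr rfl fun q hq ↦ ?_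
      rw [mem_antidiagonal.1 hq, Nat.cast_smul_eq_nsmul, map_nsmul]
    _ = _ := by
      rw [sum_pow_sum_choose_nsmul_ldelta, sum_choose_nsmul_bracketLift]
      abel

end LieTwoAlg

section Convergence

open Finset

open scoped Nat

variable {g0 gm E : Type*} [NormedAddCommGroup g0] [NormedSpace ℝ g0]
  [NormedAddCommGroup gm] [NormedSpace ℝ gm] [NormedAddCommGroup E] [NormedSpace ℝ E]

lemma summable_norm_inv_factorial_smul_pow_apply [FiniteDimensional ℝ E]
    (X : E →ₗ[ℝ] E) (v : E) : Summable fun n : ℕ ↦ ‖(n ! : ℝ)⁻¹ • (X ^ n) v‖ := by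
  let T : E →L[ℝ] E := Module.End.toContinuousLinearMap E X
  refine .of_nonneg_of_le (fun _ ↦ norm_nonneg _) (fun n ↦ ?_)
    ((NormedSpace.norm_expSeries_summable' (𝕂 := ℝ) T).mul_right ‖v‖)
  have pow_apply : (X ^ n) v = (T ^ n) v := by rw [← map_pow]; rfl
  rw [pow_apply, ← _root_.smul_apply]
  exact ContinuousLinearMap.le_opNorm _ _

lemma eTh_one_eq_of_hasSum {d : gm →ₗ[ℝ] g0} {Θ : g0 →ₗ[ℝ] gm} {x : g0} {s : gm}
    (h : HasSum (fun n : ℕ ↦ (n ! : ℝ)⁻¹ • twistedPow d Θ n x) s) : eTh d Θ 1 x = s := by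
  have h_shift := (hasSum_nat_add_iff' 1).2 h
  simpa [eTh, twistedPow_succ_apply] using h_shift.tsum_eq

section FiniteDimensional

variable [FiniteDimensional ℝ gm] (d : gm →ₗ[ℝ] g0) (Θ : g0 →ₗ[ℝ] gm) (x : g0)

lemma summable_norm_inv_factorial_smul_twistedPow :
    Summable fun n : ℕ ↦ ‖(n ! : ℝ)⁻¹ • twistedPow d Θ n x‖ := by
  refine (summable_nat_add_iff 1).1 <| .of_nonneg_of_le (fun _ ↦ norm_nonneg _) (fun n ↦ ?_)
    (summable_norm_inv_factorial_smul_pow_apply (Θ ∘ₗ d) (Θ x))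
  rw [twistedPow_succ_apply', norm_smul, norm_smul, norm_inv, norm_inv, RCLike.norm_natCast,
    RCLike.norm_natCast]
  gcongr
  exact n.le_succ

lemma hasSum_eTh : HasSum (fun n : ℕ ↦ (n ! : ℝ)⁻¹ • twistedPow d Θ n x) (eTh d Θ 1 x) := by
  have hasSum := (summable_norm_inv_factorial_smul_twistedPow d Θ x).of_norm.hasSum
  rwa [← eTh_one_eq_of_hasSum hasSum] at hasSum

lemma eTh_comp (d : E →ₗ[ℝ] g0) (ι : gm →ₗ[ℝ] E) :
    eTh d (ι ∘ₗ Θ) 1 x = ι (eTh (d ∘ₗ ι) Θ 1 x) := by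
  apply eTh_one_eq_of_hasSum
  simpa [twistedPow_comp] using ι.toContinuousLinearMap.hasSum (hasSum_eTh (d ∘ₗ ι) Θ x)

end FiniteDimensional

section FiniteRank

variable (d : gm →ₗ[ℝ] g0) (Θ : g0 →ₗ[ℝ] gm) [FiniteDimensional ℝ (LinearMap.range Θ)]

lemma hasSum_map_eTh (L : gm →ₗ[ℝ] E) (x : g0) :
    HasSum (fun n : ℕ ↦ (n ! : ℝ)⁻¹ • L (twistedPow d Θ n x)) (L (eTh d Θ 1 x)) := by
  set ι := (LinearMap.range Θ).subtype
  set θ := Θ.rangeRestrict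
  simp only [show Θ = ι ∘ₗ θ from rfl, eTh_comp, twistedPow_comp]
  simpa using (L ∘ₗ ι).toContinuousLinearMap.hasSum (hasSum_eTh (d ∘ₗ ι) θ x)

lemma hasSum_bilinear_eTh (B : gm →ₗ[ℝ] gm →ₗ[ℝ] E) (x y : g0) :
    HasSum (fun n : ℕ ↦ (n ! : ℝ)⁻¹ • ∑ p ∈ antidiagonal n,
        n.choose p.1 • B (twistedPow d Θ p.1 x) (twistedPow d Θ p.2 y))
      (B (eTh d Θ 1 x) (eTh d Θ 1 y)) := by
  set ι := (LinearMap.range Θ).subtype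
  set θ := Θ.rangeRestrict
  simp only [show Θ = ι ∘ₗ θ from rfl, eTh_comp, twistedPow_comp]
  convert! hasSum_sum_antidiagonal_bilinear_of_summable_norm
    (B.compl₁₂ ι ι).toContinuousBilinearMap (hasSum_eTh (d ∘ₗ ι) θ x) (hasSum_eTh (d ∘ₗ ι) θ y)
    (summable_norm_inv_factorial_smul_twistedPow _ _ _)
    (summable_norm_inv_factorial_smul_twistedPow _ _ _) using 2 with n
  rw [smul_sum]
  refine sum_congr rfl fun p hp ↦ ?_
  have coeff : (n ! : ℝ)⁻¹ * n.choose p.1 = (p.1 ! : ℝ)⁻¹ * (p.2 ! : ℝ)⁻¹ := by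
    rw [← mem_antidiagonal.1 hp, Nat.cast_add_choose]
    field_simp
  rw [← Nat.cast_smul_eq_nsmul ℝ, smul_smul, coeff, mul_smul, smul_comm]
  simp

lemma add_d_eTh_eq_expv (x : g0) : x + d (eTh d Θ 1 x) = expv (d ∘ₗ Θ) x := by
  have hasSum := (hasSum_ite_eq 0 x).add (hasSum_map_eTh d Θ d x)
  refine (HasSum.tsum_eq ?_).symm
  convert! hasSum using 2 with n
  rw [pow_comp_apply_eq_ite_add]
  split_ifs with h <;> simp [h]

lemma add_eTh_d_eq_expv (a : gm) : a + eTh d Θ 1 (d a) = expv (Θ ∘ₗ d) a := by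
  have hasSum := (hasSum_ite_eq 0 a).add (hasSum_map_eTh d Θ .id (d a))
  refine (HasSum.tsum_eq ?_).symm
  convert! hasSum using 2 with n
  rw [pow_comp_apply_eq_ite_add']
  split_ifs with h <;> simp [h]

lemma tsum_sum_antidiagonalTuple_ldelta (G : LieTwoAlg ℝ g0 gm) (x y : g0) :
    ∑' n : ℕ, ((n + 1)! : ℝ)⁻¹ • ∑ c ∈ Finset.Nat.antidiagonalTuple 3 n,
        ((c 0 + c 1).choose (c 0) : ℝ) • ((Θ ∘ₗ G.d) ^ c 2)
          (ldelta G Θ (((G.d ∘ₗ Θ) ^ c 0) x) (((G.d ∘ₗ Θ) ^ c 1) y))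
      = eTh G.d Θ 1 (G.b0 x y) - G.b1 x (eTh G.d Θ 1 y) + G.b1 y (eTh G.d Θ 1 x)
        + G.b1 (G.d (eTh G.d Θ 1 y)) (eTh G.d Θ 1 x) := by
  have hasSum :=
    (((hasSum_map_eTh G.d Θ .id (G.b0 x y)).sub (hasSum_map_eTh G.d Θ (G.b1 x) y)).add
      (hasSum_map_eTh G.d Θ (G.b1 y) x)).add
        (hasSum_bilinear_eTh G.d Θ (G.b1 ∘ₗ G.d).flip x y)
  have hasSum_shift := (hasSum_nat_add_iff' 1).2 hasSum
  simpa [G.sum_antidiagonalTuple_choose_smul_pow_ldelta, smul_add, smul_sub]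
    using hasSum_shift.tsum_eq

end FiniteRank

end Convergence

theorem partial_exp_eq_exp_dbar_general
    {g0 gm : Type*}
    [NormedAddCommGroup g0] [NormedSpace ℝ g0]
    [NormedAddCommGroup gm] [NormedSpace ℝ gm]
    (G : LieTwoAlg ℝ g0 gm) (Θ : g0 →ₗ[ℝ] gm)
    [FiniteDimensional ℝ (LinearMap.range Θ)] :
    (∀ x : g0, x + G.d (eTh G.d Θ 1 x) = expv (G.d ∘ₗ Θ) x) ∧
    (∀ a : gm, a + eTh G.d Θ 1 (G.d a) = expv (Θ ∘ₗ G.d) a) ∧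
    (∀ x y : g0,
      (∑' n : ℕ, (((n + 1).factorial : ℝ))⁻¹ •
        ∑ c ∈ Finset.Nat.antidiagonalTuple 3 n,
          (((c 0 + c 1).choose (c 0) : ℝ)) •
            ((Θ ∘ₗ G.d) ^ (c 2))
              (ldelta G Θ (((G.d ∘ₗ Θ) ^ (c 0)) x) (((G.d ∘ₗ Θ) ^ (c 1)) y)))
      = eTh G.d Θ 1 (G.b0 x y)
        - G.b1 x (eTh G.d Θ 1 y)
        + G.b1 y (eTh G.d Θ 1 x)
        + G.b1 (G.d (eTh G.d Θ 1 y)) (eTh G.d Θ 1 x)) :=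
  ⟨add_d_eTh_eq_expv G.d Θ, add_eTh_d_eq_expv G.d Θ, tsum_sum_antidiagonalTuple_ldelta Θ G⟩

/-- the exponential maps commute with the differentials,
`∂(e^Θ) = e^{d̄(Θ)}`, componentwise: (1) `id + d∘e^Θ = exp(d∘Θ)`;
(2) `id + e^Θ∘d = exp(Θ∘d)`; (3) the series `e^{l_{δ(Θ)}}` equals
`l^{id}_{e^Θ}(x,y) = e^Θ[x,y] − [e^Θx,y] − [x,e^Θy] − [e^Θx, d e^Θ y]`. -/
theorem partial_exp_eq_exp_dbar
    {g0 gm : Type*}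
    [NormedAddCommGroup g0] [NormedSpace ℝ g0] [FiniteDimensional ℝ g0]
    [NormedAddCommGroup gm] [NormedSpace ℝ gm] [FiniteDimensional ℝ gm]
    (G : LieTwoAlg ℝ g0 gm) (Θ : g0 →ₗ[ℝ] gm) :
    (∀ x : g0, x + G.d (eTh G.d Θ 1 x) = expv (G.d ∘ₗ Θ) x) ∧
    (∀ a : gm, a + eTh G.d Θ 1 (G.d a) = expv (Θ ∘ₗ G.d) a) ∧
    (∀ x y : g0,
      (∑' n : ℕ, (((n + 1).factorial : ℝ))⁻¹ •
        ∑ c ∈ Finset.Nat.antidiagonalTuple 3 n,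
          (((c 0 + c 1).choose (c 0) : ℝ)) •
            ((Θ ∘ₗ G.d) ^ (c 2))
              (ldelta G Θ (((G.d ∘ₗ Θ) ^ (c 0)) x) (((G.d ∘ₗ Θ) ^ (c 1)) y)))
      = eTh G.d Θ 1 (G.b0 x y)
        - G.b1 x (eTh G.d Θ 1 y)
        + G.b1 y (eTh G.d Θ 1 x)
        + G.b1 (G.d (eTh G.d Θ 1 y)) (eTh G.d Θ 1 x)) := by
  exact partial_exp_eq_exp_dbar_general G Θ
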